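/- Let 𝒜 and ℬ be AD-families on ℕ and let f : ℕ → ℕ be a surjection with f[F_ℬ] = F_𝒜 (i.e., F_𝒜 ≤_RK F_ℬ via f). Then F_{𝒟_f} = F_𝒜, where 𝒟_f = {f[B] : B ∈ ℬ} and f[B] = {f(b) : b ∈ B}. -/

import Mathlib

open Set

/-- `f[G] = {A : f⁻¹(A) ∈ G}`, the image (Rudin–Keisler) filter of a family of sets. -/
def mapFilter {α β : Type*} (f : α → β) (G : Set (Set α)) : Set (Set β) := {A | f ⁻¹' A ∈ G}

/-- `F` is a (proper) filter of subsets. -/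
def IsFilterFam {α : Type*} (F : Set (Set α)) : Prop :=
  Set.univ ∈ F ∧ (∀ A ∈ F, ∀ B : Set α, A ⊆ B → B ∈ F) ∧ (∀ A ∈ F, ∀ B ∈ F, A ∩ B ∈ F)

/-- A free filter: a proper filter containing all cofinite sets. -/
def IsFreeFilter {α : Type*} (F : Set (Set α)) : Prop :=
  IsFilterFam F ∧ (∀ A : Set α, Aᶜ.Finite → A ∈ F) ∧ ∅ ∉ F

/-- `S → F` : `S` is an infinite set converging to the filter `F`, i.e. `S ⊆* A` for all `A ∈ F`. -/
def ConvTo {α : Type*} (S : Set α) (F : Set (Set α)) : Prop :=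
  S.Infinite ∧ ∀ A ∈ F, (S \ A).Finite

/-- `F` is relatively equivalent to the Fréchet filter: some `A ∈ F` converges to `F`. -/
def RelFrechet {α : Type*} (F : Set (Set α)) : Prop := ∃ A ∈ F, ConvTo A F

/-- Rudin–Keisler order: `F ≤_RK G` iff `f[G] = F` for some surjection `f`. -/
def RKle {α : Type*} (F G : Set (Set α)) : Prop :=
  ∃ f : α → α, Function.Surjective f ∧ mapFilter f G = F

/-- `F ≈ G` : there is a bijection `f` with `f[F] = G`. -/
def EquivFilter {α : Type*} (F G : Set (Set α)) : Prop :=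
  ∃ f : α → α, Function.Bijective f ∧ mapFilter f F = G

/-- `F <_RK G` : `F ≤_RK G` and `¬ (F ≈ G)`. -/
def RKlt {α : Type*} (F G : Set (Set α)) : Prop := RKle F G ∧ ¬ EquivFilter F G

/-- An AD-family: an infinite family of infinite sets with pairwise finite intersections. -/
def IsADFamily {α : Type*} (𝒜 : Set (Set α)) : Prop :=
  𝒜.Infinite ∧ (∀ A ∈ 𝒜, A.Infinite) ∧ ∀ A ∈ 𝒜, ∀ B ∈ 𝒜, A ≠ B → (A ∩ B).Finite

/-- The ideal generated by a family `𝒜`: sets almost covered by finitely many members of `𝒜`. -/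
def idealGen {α : Type*} (𝒜 : Set (Set α)) : Set (Set α) :=
  {X | ∃ 𝒜' : Finset (Set α), ↑𝒜' ⊆ 𝒜 ∧ (X \ ⋃₀ ↑𝒜').Finite}

/-- `S_𝒜`: the filter dual to the ideal generated by `𝒜`. -/
def SFam {α : Type*} (𝒜 : Set (Set α)) : Set (Set α) := {F | Fᶜ ∈ idealGen 𝒜}

/-- `F_𝒟 = {F : D ⊆* F for every D ∈ 𝒟}`. -/
def FFam {α : Type*} (𝒟 : Set (Set α)) : Set (Set α) := {F | ∀ D ∈ 𝒟, (D \ F).Finite}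

/-- A nowhere MAD family: every set outside the generated ideal contains an infinite set
almost disjoint from every member of `𝒜`. -/
def IsNMAD {α : Type*} (𝒜 : Set (Set α)) : Prop :=
  IsADFamily 𝒜 ∧ ∀ X : Set α, X ∉ idealGen 𝒜 →
    ∃ B ⊆ X, B.Infinite ∧ ∀ A ∈ 𝒜, (B ∩ A).Finite

/-- A partition of `ℕ` into infinitely many infinite sets. -/
def IsInfPartition (𝒬 : Set (Set ℕ)) : Prop :=
  𝒬.Infinite ∧ (∀ P ∈ 𝒬, P.Infinite) ∧ ⋃₀ 𝒬 = Set.univ ∧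
    ∀ P ∈ 𝒬, ∀ Q ∈ 𝒬, P ≠ Q → P ∩ Q = ∅

/-- `F` is a Fréchet–Urysohn filter: every `F`-positive set contains a sequence converging to `F`. -/
def IsFUFilter {α : Type*} (F : Set (Set α)) : Prop :=
  ∀ A : Set α, Aᶜ ∉ F → ∃ S ⊆ A, ConvTo S F

/-- The trace filter `F|_A = {G ∩ A : G ∈ F}`. -/
def traceFam {α : Type*} (F : Set (Set α)) (A : Set α) : Set (Set α) := {S | ∃ G ∈ F, S = G ∩ A}

/-- Todorčević–Uzcátegui order: there are `A ∈ G⁺`, `B ∈ F` and a bijection `f : A → B`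
with `f[G|_A] = F|_B`. -/
def TUle {α : Type*} (F G : Set (Set α)) : Prop :=
  ∃ A : Set α, Aᶜ ∉ G ∧ ∃ B ∈ F, ∃ f : α → α, Set.BijOn f A B ∧
    {Y : Set α | Y ⊆ B ∧ A ∩ f ⁻¹' Y ∈ traceFam G A} = traceFam F B

/-!
Since `f[B \ f⁻¹(X)] = f[B] \ X`, membership of `X` in `f[F_ℬ]` always implies membership in
`F_{𝒟_f}`, and the converse holds as soon as `f` is finite-to-one on every `B ∈ ℬ`. The latter is
what it means for `f[F_ℬ]` to contain the complement of every point, which it does because `F_𝒜`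
contains all cofinite sets.
-/

section

variable {α β : Type*} {f : α → β}

theorem mem_fFam_of_finite_compl {𝒟 : Set (Set α)} {F : Set α} (hF : Fᶜ.Finite) : F ∈ FFam 𝒟 :=
  fun _ _ => hF.subset fun _ hx => hx.2

theorem compl_singleton_mem_mapFilter_fFam_iff {ℬ : Set (Set α)} {y : β} :
    {y}ᶜ ∈ mapFilter f (FFam ℬ) ↔ ∀ B ∈ ℬ, (B ∩ f ⁻¹' {y}).Finite := by
  simp only [mapFilter, FFam, mem_ofPred_eq, preimage_compl, sdiff_compl]

theorem finite_image_sdiff_iff {B : Set α} (hB : ∀ y, (B ∩ f ⁻¹' {y}).Finite) (X : Set β) :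
    (f '' B \ X).Finite ↔ (B \ f ⁻¹' X).Finite := by
  rw [← image_sdiff_preimage]
  refine ⟨fun himage => .of_finite_fibers f himage fun y _ => ?_, fun hsdiff => hsdiff.image f⟩
  exact (hB y).subset (inter_subset_inter_left _ sdiff_subset)

theorem fFam_image_eq_mapFilter {ℬ : Set (Set α)}
    (hℬ : ∀ B ∈ ℬ, ∀ y, (B ∩ f ⁻¹' {y}).Finite) :
    FFam ((fun B => f '' B) '' ℬ) = mapFilter f (FFam ℬ) := by
  ext X
  simp only [mapFilter, FFam, mem_ofPred_eq, forall_mem_image]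
  exact forall₂_congr fun B hB => finite_image_sdiff_iff (hℬ B hB) X

theorem statement4_general {𝒜 : Set (Set β)} {ℬ : Set (Set α)}
    (h : mapFilter f (FFam ℬ) = FFam 𝒜) :
    FFam ((fun B => f '' B) '' ℬ) = FFam 𝒜 := by
  have finite_fibers : ∀ B ∈ ℬ, ∀ y, (B ∩ f ⁻¹' {y}).Finite := by
    intro B hB y
    have hy : {y}ᶜ ∈ mapFilter f (FFam ℬ) := by
      rw [h]
      exact mem_fFam_of_finite_compl (by simp only [compl_compl, finite_singleton])
    exact compl_singleton_mem_mapFilter_fFam_iff.mp hy B hB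
  rw [fFam_image_eq_mapFilter finite_fibers, h]

end

/-- If `F_𝒜 ≤_RK F_ℬ` via `f`, then `F_{𝒟_f} = F_𝒜` where `𝒟_f = {f[B] : B ∈ ℬ}`. -/
theorem statement4 (𝒜 ℬ : Set (Set ℕ)) (h𝒜 : IsADFamily 𝒜) (hℬ : IsADFamily ℬ)
    (f : ℕ → ℕ) (hf : Function.Surjective f)
    (h : mapFilter f (FFam ℬ) = FFam 𝒜) :
    FFam ((fun B => f '' B) '' ℬ) = FFam 𝒜 :=
  statement4_general h
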